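/- For every n ∈ ℕ there exists a finite simplicial graph Δ_n with the following universal property: for every simplicial graph Γ with countably many vertices such that the equivalence relation on V(Γ) defined by v ~ u ⟺ v^⊥ = u^⊥ has at most n equivalence classes, there is an injective group homomorphism 𝔾(Γ) → 𝔾(Δ_n). In other words, for every n there is a single finitely generated partially commutative group containing every such partially commutative group. -/

import Mathlib

/-- The set of commutation relators of a simplicial graph: one commutator
`[u,v]` for each pair of adjacent vertices. -/
def raagRels {V : Type*} (Γ : SimpleGraph V) : Set (FreeGroup V) :=
  {r | ∃ u v : V, Γ.Adj u v ∧
    r = FreeGroup.of u * FreeGroup.of v * (FreeGroup.of u)⁻¹ * (FreeGroup.of v)⁻¹}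

/-- The partially commutative group (right-angled Artin group) of a simplicial graph. -/
abbrev Raag {V : Type*} (Γ : SimpleGraph V) := PresentedGroup (raagRels Γ)

/-- The equivalence relation `v ~ u ↔ v^⊥ = u^⊥` on the vertices of a graph. -/
def neighborSetoid {V : Type*} (Γ : SimpleGraph V) : Setoid V :=
  Setoid.ker fun v => Γ.neighborSet v

/-!
Let `Γ` be a countable graph whose deflation embeds in a graph `Δ`. Numbering the vertices of `Γ`
embeds `Γ` in the blow-up of `Δ` in which every vertex is replaced by a copy of `ℤ`. The group of
this blow-up embeds in the group of the double of `Δ`, in which every vertex `v` is replaced by two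
non-adjacent copies `t` and `x`: send the `k`-th copy of `v` to `tᵏ x t⁻ᵏ`. This is injective
because letting each `t` act by translating the copies of its vertex maps the group of the double to
a semidirect product that contains the group of the blow-up. Hence the double of any finite graph
containing all graphs on `n` vertices, such as their disjoint union, is universal.
-/

section Graphs

variable {V W ι S : Type*}

/-- The blow-up of a graph, in which every vertex is replaced by an independent set `S`; copies of
adjacent vertices are adjacent. -/
def blowUp (Γ : SimpleGraph V) (S : Type*) : SimpleGraph (V × S) :=
  Γ.comap Prod.fst

/-- The deflation of a graph: its quotient by the relation `neighborSetoid` of having the same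
neighbours. -/
def deflation (Γ : SimpleGraph V) : SimpleGraph (Quotient (neighborSetoid Γ)) where
  Adj := Quotient.lift₂ Γ.Adj fun u v u' v' (hu : Γ.neighborSet u = Γ.neighborSet u')
      (hv : Γ.neighborSet v = Γ.neighborSet v') ↦ propext <| calc
    Γ.Adj u v ↔ Γ.Adj u' v := Set.ext_iff.mp hu v
    _ ↔ Γ.Adj v u' := Γ.adj_comm u' v
    _ ↔ Γ.Adj v' u' := Set.ext_iff.mp hv u'
    _ ↔ Γ.Adj u' v' := Γ.adj_comm v' u'
  symm := ⟨by rintro ⟨u⟩ ⟨v⟩ h; exact Γ.adj_symm h⟩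
  loopless := ⟨by rintro ⟨v⟩ h; exact Γ.irrefl h⟩

/-- A graph whose deflation embeds in `Δ` embeds in a blow-up of `Δ`, vertices with the same
neighbours being told apart by the labelling `label`. -/
def embeddingBlowUp {Γ : SimpleGraph V} {Δ : SimpleGraph W} (φ : deflation Γ ↪g Δ)
    (label : V ↪ S) : Γ ↪g blowUp Δ S where
  toFun v := (φ (Quotient.mk _ v), label v)
  inj' _ _ h := label.injective (congrArg Prod.snd h)
  map_rel_iff' := φ.map_adj_iff

/-- The disjoint union of a family of graphs with the same vertex type. -/
def disjointUnion (G : ι → SimpleGraph V) : SimpleGraph (ι × V) where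
  Adj p q := p.1 = q.1 ∧ (G p.1).Adj p.2 q.2
  symm := ⟨by
    rintro ⟨i, u⟩ ⟨_, v⟩ ⟨rfl, h⟩
    exact ⟨rfl, h.symm⟩⟩
  loopless := ⟨fun p h ↦ (G p.1).irrefl h.2⟩

/-- The inclusion of a graph of the family into the disjoint union. -/
def embeddingDisjointUnion (G : ι → SimpleGraph V) (i : ι) : G i ↪g disjointUnion G where
  toFun v := (i, v)
  inj' := Prod.mk_right_injective i
  map_rel_iff' := and_iff_right rfl

/-- The action of `V → ℤ` on the blow-up `blowUp Γ ℤ` which translates the copies of `v` by the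
`v`-th coordinate. -/
def blowUpShift (Γ : SimpleGraph V) :
    Multiplicative (V → ℤ) →* (blowUp Γ ℤ ≃g blowUp Γ ℤ) where
  toFun x :=
    { toEquiv := Equiv.prodShear (Equiv.refl V) fun v ↦ Equiv.addRight (x.toAdd v)
      map_rel_iff' := Iff.rfl }
  map_one' := RelIso.ext fun p ↦ Prod.ext rfl (add_zero p.2)
  map_mul' x y := RelIso.ext fun p ↦ Prod.ext rfl <| by
    change p.2 + (x.toAdd p.1 + y.toAdd p.1) = p.2 + y.toAdd p.1 + x.toAdd p.1
    ring

end Graphs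

theorem commute_conj_zpow {G : Type*} [Group G] {a b c : G} (hac : Commute a c)
    (hbc : Commute b c) (k : ℤ) : Commute (a ^ k * b * (a ^ k)⁻¹) c :=
  ((hac.zpow_left k).mul_left hbc).mul_left (hac.zpow_left k).inv_left

namespace Raag

open PresentedGroup (of)

section Functoriality

variable {V W G : Type*} [Group G] {Γ : SimpleGraph V} {Δ : SimpleGraph W}

theorem commute_of_adj {u v : V} (h : Γ.Adj u v) : Commute (of u : Raag Γ) (of v) :=
  commutatorElement_eq_one_iff_commute.mp (PresentedGroup.one_of_mem ⟨u, v, h, rfl⟩)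

/-- The homomorphism out of a partially commutative group determined by the images of the
vertices. -/
def lift (f : V → G) (hf : ∀ ⦃u v⦄, Γ.Adj u v → Commute (f u) (f v)) : Raag Γ →* G :=
  PresentedGroup.toGroup (f := f) <| by
    rintro _ ⟨u, v, h, rfl⟩
    simpa [commutatorElement_def] using commutatorElement_eq_one_iff_commute.mpr (hf h)

@[simp]
theorem lift_of (f : V → G) (hf : ∀ ⦃u v⦄, Γ.Adj u v → Commute (f u) (f v)) (v : V) :
    lift f hf (of v) = f v :=
  PresentedGroup.toGroup.of _

/-- The homomorphism of partially commutative groups induced by a graph homomorphism. -/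
def map (φ : Γ →g Δ) : Raag Γ →* Raag Δ :=
  lift (fun v ↦ of (φ v)) fun _ _ h ↦ commute_of_adj (φ.map_adj h)

@[simp]
theorem map_of (φ : Γ →g Δ) (v : V) : map φ (of v) = of (φ v) :=
  lift_of _ _ v

/-- The retraction onto the group of an induced subgraph which kills all other vertices. -/
noncomputable def retraction (φ : Γ ↪g Δ) : Raag Δ →* Raag Γ :=
  lift (Function.extend φ of 1) fun w w' h ↦ by
    by_cases hw : ∃ v, φ v = w
    · by_cases hw' : ∃ v, φ v = w'
      · obtain ⟨v, rfl⟩ := hw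
        obtain ⟨v', rfl⟩ := hw'
        simpa only [φ.injective.extend_apply] using commute_of_adj (φ.map_adj_iff.mp h)
      · rw [Function.extend_apply' _ _ _ hw']
        exact Commute.one_right _
    · rw [Function.extend_apply' _ _ _ hw]
      exact Commute.one_left _

theorem retraction_comp_map (φ : Γ ↪g Δ) :
    (retraction φ).comp (map φ.toHom) = MonoidHom.id (Raag Γ) :=
  PresentedGroup.ext fun v ↦ by
    simp [retraction, φ.injective.extend_apply]

theorem map_injective (φ : Γ ↪g Δ) : Function.Injective (map φ.toHom) :=
  Function.LeftInverse.injective (DFunLike.congr_fun (retraction_comp_map φ))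

/-- The action of the automorphism group of a graph on its partially commutative group. -/
def mapAut (Γ : SimpleGraph V) : (Γ ≃g Γ) →* MulAut (Raag Γ) where
  toFun φ := MonoidHom.toMulEquiv (map φ.toHom) (map φ.symm.toHom)
    (PresentedGroup.ext fun v ↦ by simp) (PresentedGroup.ext fun v ↦ by simp)
  map_one' := MulEquiv.toMonoidHom_injective <| PresentedGroup.ext fun v ↦ map_of _ v
  map_mul' φ ψ := MulEquiv.toMonoidHom_injective <| PresentedGroup.ext fun v ↦ by simp

theorem mapAut_of (φ : Γ ≃g Γ) (v : V) : mapAut Γ φ (of v) = of (φ v) :=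
  map_of φ.toHom v

end Functoriality

section Double

variable {V : Type*} (Γ : SimpleGraph V)

/-- The homomorphism `(v, k) ↦ tᵏ x t⁻ᵏ`, where `t = (v, false)` and `x = (v, true)` are the two
copies of `v` in the double of `Γ`. -/
def blowUpToDouble : Raag (blowUp Γ ℤ) →* Raag (blowUp Γ Bool) :=
  lift (fun p ↦ of (p.1, false) ^ p.2 * of (p.1, true) * (of (p.1, false) ^ p.2)⁻¹)
    fun p q (h : Γ.Adj p.1 q.1) ↦ by
      have commute_copies (b c : Bool) :
          Commute (of (p.1, b) : Raag (blowUp Γ Bool)) (of (q.1, c)) := commute_of_adj h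
      have commute_conj (c : Bool) := commute_conj_zpow
        (commute_copies false c) (commute_copies true c) p.2
      exact (commute_conj_zpow (commute_conj false).symm (commute_conj true).symm q.2).symm

theorem blowUpToDouble_of (v : V) (k : ℤ) :
    blowUpToDouble Γ (of (v, k)) =
      of (v, false) ^ k * of (v, true) * (of (v, false) ^ k)⁻¹ :=
  lift_of _ _ _

/-- The action of `V → ℤ` on `Raag (blowUp Γ ℤ)` by translation of the copies of each vertex. -/
def shift : Multiplicative (V → ℤ) →* MulAut (Raag (blowUp Γ ℤ)) :=
  (mapAut (blowUp Γ ℤ)).comp (blowUpShift Γ)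

theorem shift_of (x : Multiplicative (V → ℤ)) (v : V) (k : ℤ) :
    shift Γ x (of (v, k)) = of (v, k + x.toAdd v) :=
  mapAut_of _ _

section Translation

variable [DecidableEq V]

/-- The generator of `Multiplicative (V → ℤ)` at the vertex `v`. -/
def translation (v : V) : Multiplicative (V → ℤ) :=
  Multiplicative.ofAdd (Pi.single v 1)

theorem shift_translation_of_ne {u v : V} (h : u ≠ v) (k : ℤ) :
    shift Γ (translation v) (of (u, k)) = of (u, k) := by
  simp [shift_of, translation, h]

theorem shift_translation_zpow_of (v : V) (k : ℤ) :
    shift Γ (translation v ^ k) (of (v, 0)) = of (v, k) := by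
  rw [shift_of]
  simp [translation]

theorem commute_inl_inr_translation {u v : V} (h : u ≠ v) (k : ℤ) :
    Commute (SemidirectProduct.inl (of (u, k)) : Raag (blowUp Γ ℤ) ⋊[shift Γ] _)
      (SemidirectProduct.inr (translation v)) := by
  have inl_eq_conj := SemidirectProduct.inl_aut (φ := shift Γ) (translation v) (of (u, k))
  rw [shift_translation_of_ne Γ h, map_inv] at inl_eq_conj
  exact eq_mul_inv_iff_mul_eq.mp inl_eq_conj

/-- The images of the vertices of the double of `Γ` under `doubleToSemidirect`. -/
def doubleToSemidirectFun :
    V × Bool → Raag (blowUp Γ ℤ) ⋊[shift Γ] Multiplicative (V → ℤ)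
  | (v, false) => SemidirectProduct.inr (translation v)
  | (v, true) => SemidirectProduct.inl (of (v, 0))

/-- The homomorphism from the group of the double of `Γ` which lets the copy `(v, false)` act on
the group of the blow-up as the translation at `v`. -/
def doubleToSemidirect :
    Raag (blowUp Γ Bool) →* Raag (blowUp Γ ℤ) ⋊[shift Γ] Multiplicative (V → ℤ) :=
  lift (doubleToSemidirectFun Γ) <| by
    rintro ⟨u, _ | _⟩ ⟨v, _ | _⟩ (h : Γ.Adj u v)
    · exact (Commute.all _ _).map SemidirectProduct.inr
    · exact (commute_inl_inr_translation Γ h.ne' 0).symm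
    · exact commute_inl_inr_translation Γ h.ne 0
    · have commute_of : Commute (of (u, 0) : Raag (blowUp Γ ℤ)) (of (v, 0)) := commute_of_adj h
      exact commute_of.map SemidirectProduct.inl

theorem doubleToSemidirect_of (p : V × Bool) :
    doubleToSemidirect Γ (of p) = doubleToSemidirectFun Γ p :=
  lift_of _ _ _

theorem doubleToSemidirect_comp_blowUpToDouble :
    (doubleToSemidirect Γ).comp (blowUpToDouble Γ) = SemidirectProduct.inl :=
  PresentedGroup.ext fun ⟨v, k⟩ ↦ by
    have inl_eq_conj := SemidirectProduct.inl_aut (φ := shift Γ) (translation v ^ k) (of (v, 0))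
    rw [shift_translation_zpow_of] at inl_eq_conj
    simp [inl_eq_conj, blowUpToDouble_of, doubleToSemidirect_of, doubleToSemidirectFun]

end Translation

theorem blowUpToDouble_injective : Function.Injective (blowUpToDouble Γ) := by
  classical
  apply Function.Injective.of_comp (f := doubleToSemidirect Γ)
  rw [← MonoidHom.coe_comp, doubleToSemidirect_comp_blowUpToDouble]
  exact SemidirectProduct.inl_injective

end Double

theorem exists_injective_of_deflation_embedding {V W : Type*} [Countable V]
    {Γ : SimpleGraph V} {Δ : SimpleGraph W} (φ : deflation Γ ↪g Δ) :
    ∃ ψ : Raag Γ →* Raag (blowUp Δ Bool), Function.Injective ψ := by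
  obtain ⟨label, label_injective⟩ := exists_injective_nat V
  let toBlowUp : Γ ↪g blowUp Δ ℤ :=
    embeddingBlowUp φ (.trans ⟨label, label_injective⟩ Nat.castEmbedding)
  exact ⟨(blowUpToDouble Δ).comp (map toBlowUp.toHom),
    (blowUpToDouble_injective Δ).comp (map_injective toBlowUp)⟩

end Raag

theorem universal_pc_group_for_bounded_deflation (n : ℕ) :
    ∃ (m : ℕ) (Δ : SimpleGraph (Fin m)),
      ∀ (V : Type) [Countable V] (Γ : SimpleGraph V),
        (∃ f : Quotient (neighborSetoid Γ) → Fin n, Function.Injective f) →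
        ∃ φ : Raag Γ →* Raag Δ, Function.Injective φ := by
  let U := disjointUnion fun G : SimpleGraph (Fin n) ↦ G
  obtain ⟨m, ⟨e⟩⟩ := Finite.exists_equiv_fin ((SimpleGraph (Fin n) × Fin n) × Bool)
  refine ⟨m, (blowUp U Bool).map e, ?_⟩
  rintro V _ Γ ⟨f, hf⟩
  let deflationToU : deflation Γ ↪g U :=
    (embeddingDisjointUnion _ _).comp (SimpleGraph.Embedding.map ⟨f, hf⟩ (deflation Γ))
  obtain ⟨ψ, ψ_injective⟩ := Raag.exists_injective_of_deflation_embedding deflationToU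
  let renumber := (SimpleGraph.Iso.map e (blowUp U Bool)).toEmbedding
  exact ⟨(Raag.map renumber.toHom).comp ψ, (Raag.map_injective renumber).comp ψ_injective⟩
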